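/- (Pythagorean theorem for the Cramér projection) Let z₁ < z₂ < ⋯ < z_K be real numbers with K ≥ 2 and let Π_C be the associated Cramér projection. Let μ be a probability measure supported on [z₁, z_K] and let ν be a probability measure supported on {z₁,…,z_K}. Then ℓ₂²(μ, ν) = ℓ₂²(μ, Π_C μ) + ℓ₂²(Π_C μ, ν). -/

import Mathlib

open MeasureTheory Filter Set

noncomputable section

/-- The cumulative distribution function of a measure on ℝ. -/
def cdfFn (ν : Measure ℝ) (y : ℝ) : ℝ := (ν (Set.Iic y)).toReal

/-- The Cramér distance `ℓ₂` between two measures on ℝ. -/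
def cramerDist (ν₁ ν₂ : Measure ℝ) : ℝ :=
  Real.sqrt (∫ x, (cdfFn ν₁ x - cdfFn ν₂ x) ^ 2)

/-- The hat functions associated with the grid `z 0 < z 1 < ⋯ < z (K-1)`. -/
def hatFn (K : ℕ) (z : ℕ → ℝ) (i : ℕ) (x : ℝ) : ℝ :=
  if i = 0 ∧ x ≤ z 0 then 1
  else if i = K - 1 ∧ z (K - 1) ≤ x then 1
  else if i + 1 < K ∧ z i ≤ x ∧ x ≤ z (i + 1) then (z (i + 1) - x) / (z (i + 1) - z i)
  else if 0 < i ∧ z (i - 1) ≤ x ∧ x ≤ z i then (x - z (i - 1)) / (z i - z (i - 1))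
  else 0

/-- The Cramér projection onto the grid `z 0 < z 1 < ⋯ < z (K-1)`. -/
def cramerProj (K : ℕ) (z : ℕ → ℝ) (ν : Measure ℝ) : Measure ℝ :=
  ∑ i ∈ Finset.range K, (ENNReal.ofReal (∫ w, hatFn K z i w ∂ν)) • Measure.dirac (z i)

/-- The distributional Bellman operator. -/
def bellmanOp {X A : Type} [Fintype X] [Fintype A] [MeasurableSpace X] [MeasurableSpace A]
    (γ : ℝ) (p : X × A → Measure (ℝ × X)) (pol : X → Measure A)
    (η : X × A → Measure ℝ) (xa : X × A) : Measure ℝ :=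
  (p xa).bind (fun rx' => ∑ a' : A, (pol rx'.2 {a'}) • (η (rx'.2, a')).map (fun t => rx'.1 + γ * t))

/-- The supremum-Cramér metric between return distribution functions. -/
def supCramer {X A : Type} [Fintype X] [Fintype A] (η μ : X × A → Measure ℝ) : ℝ :=
  ⨆ xa : X × A, cramerDist (η xa) (μ xa)

/-- Square-integrable tails of the CDF. -/
def sqIntTails (ν : Measure ℝ) : Prop :=
  IntegrableOn (fun x => (cdfFn ν x) ^ 2) (Set.Iic 0) ∧
  IntegrableOn (fun x => (1 - cdfFn ν x) ^ 2) (Set.Ici 0)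

/-!
The distribution function of a measure carried by the grid is constant on each cell
`[z j, z (j + 1))`, vanishes to the left of the grid and equals one to the right of it. The sum
of the hat functions at `z 0, …, z j` is a ramp descending from one to zero across the `j`-th cell,
so by the layer-cake formula the distribution function of the Cramér projection takes on each cell
the average of the original distribution function over that cell. Hence `F_μ - F_Πμ` has mean zero
on every cell and is orthogonal in `L²` to the grid step function `F_Πμ - F_ν`.
-/

section Orthogonality

theorem integral_sub_sq_eq_add_of_integral_mul_eq_zero {α : Type*} [MeasurableSpace α]
    {m : Measure α} {f g h : α → ℝ} (hfg : MemLp (f - g) 2 m) (hgh : MemLp (g - h) 2 m)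
    (horth : ∫ x, (f x - g x) * (g x - h x) ∂m = 0) :
    ∫ x, (f x - h x) ^ 2 ∂m = ∫ x, (f x - g x) ^ 2 ∂m + ∫ x, (g x - h x) ^ 2 ∂m := by
  have hfg_sq : Integrable (fun x => (f x - g x) ^ 2) m := hfg.integrable_sq
  have hgh_sq : Integrable (fun x => (g x - h x) ^ 2) m := hgh.integrable_sq
  have hsum : Integrable (fun x => (f x - g x) ^ 2 + (g x - h x) ^ 2) m := hfg_sq.add hgh_sq
  have hcross : Integrable (fun x => (f x - g x) * (g x - h x)) m := hfg.integrable_mul hgh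
  calc ∫ x, (f x - h x) ^ 2 ∂m
      = ∫ x, (f x - g x) ^ 2 + (g x - h x) ^ 2 + 2 * ((f x - g x) * (g x - h x)) ∂m := by
        congr with x
        ring
    _ = ∫ x, (f x - g x) ^ 2 ∂m + ∫ x, (g x - h x) ^ 2 ∂m := by
        rw [integral_add hsum (hcross.const_mul 2), integral_add hfg_sq hgh_sq,
          integral_const_mul, horth, mul_zero, add_zero]

theorem integral_sub_average_mul_eq_zero {n : ℕ} {z : ℕ → ℝ} {f p g : ℝ → ℝ}
    (hz : StrictMonoOn z (Iic n))
    (hf : ∀ j < n, IntervalIntegrable f volume (z j) (z (j + 1)))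
    (hp : ∀ j < n, ∀ x ∈ Ico (z j) (z (j + 1)), p x = ⨍ y in z j..z (j + 1), f y)
    (hg_cell : ∀ j < n, ∀ x ∈ Ico (z j) (z (j + 1)), g x = g (z j))
    (hg_off : ∀ x ∉ Ico (z 0) (z n), g x = 0) :
    ∫ x, (f x - p x) * g x = 0 := by
  have hlt : ∀ j < n, z j < z (j + 1) := fun j hj =>
    hz (mem_Iic.2 hj.le) (mem_Iic.2 hj) j.lt_succ_self
  have hcell : ∀ j < n, EqOn (fun x => (f x - ⨍ y in z j..z (j + 1), f y) * g (z j))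
      (fun x => (f x - p x) * g x) (Ioo (z j) (z (j + 1))) := fun j hj x hx => by
    simp only [hp j hj x (Ioo_subset_Ico_self hx), hg_cell j hj x (Ioo_subset_Ico_self hx)]
  have hcell_integrable : ∀ j < n,
      IntervalIntegrable (fun x => (f x - p x) * g x) volume (z j) (z (j + 1)) := fun j hj =>
    (((hf j hj).sub intervalIntegrable_const).mul_const (g (z j))).congr_uIoo
      ((hcell j hj).mono (uIoo_of_le (hlt j hj).le).subset)
  have hcell_integral : ∀ j < n, ∫ x in z j..z (j + 1), (f x - p x) * g x = 0 := fun j hj => by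
    rw [← intervalIntegral.integral_congr_Ioo_of_le (hlt j hj).le (hcell j hj),
      intervalIntegral.integral_mul_const,
      intervalIntegral.integral_sub (hf j hj) intervalIntegrable_const,
      intervalIntegral.integral_const, interval_average_eq,
      smul_inv_smul₀ (sub_pos.2 (hlt j hj)).ne', sub_self, zero_mul]
  calc ∫ x, (f x - p x) * g x
      = ∫ x in Ico (z 0) (z n), (f x - p x) * g x :=
        (setIntegral_eq_integral_of_forall_compl_eq_zero fun x hx => by
          rw [hg_off x hx, mul_zero]).symm
    _ = ∫ x in z 0..z n, (f x - p x) * g x := by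
        rw [integral_Ico_eq_integral_Ioc, intervalIntegral.integral_of_le
          (hz.monotoneOn (mem_Iic.2 n.zero_le) (mem_Iic.2 le_rfl) n.zero_le)]
    _ = ∑ j ∈ Finset.range n, ∫ x in z j..z (j + 1), (f x - p x) * g x :=
        (intervalIntegral.sum_integral_adjacent_intervals hcell_integrable).symm
    _ = 0 := Finset.sum_eq_zero fun j hj => hcell_integral j (Finset.mem_range.1 hj)

end Orthogonality

section CDF

theorem cdfFn_nonneg (ν : Measure ℝ) (x : ℝ) : 0 ≤ cdfFn ν x :=
  measureReal_nonneg

theorem cdfFn_le_one (ν : Measure ℝ) [IsProbabilityMeasure ν] (x : ℝ) : cdfFn ν x ≤ 1 :=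
  measureReal_le_one

theorem monotone_cdfFn (ν : Measure ℝ) [IsFiniteMeasure ν] : Monotone (cdfFn ν) :=
  fun _ _ hxy => measureReal_mono (Iic_subset_Iic.2 hxy)

variable {ν ν₁ ν₂ : Measure ℝ} {x y : ℝ}

theorem cdfFn_congr (h : ∀ᵐ w ∂ν, w ≤ x ↔ w ≤ y) : cdfFn ν x = cdfFn ν y :=
  measureReal_congr (h.mono fun _ hw => propext hw)

theorem cdfFn_eq_zero_of_ae_lt (h : ∀ᵐ w ∂ν, x < w) : cdfFn ν x = 0 := by
  have hnull : ν (Iic x) = 0 := measure_eq_zero_iff_ae_notMem.2 (h.mono fun _ => not_le.2)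
  rw [cdfFn, hnull, ENNReal.toReal_zero]

theorem cdfFn_eq_one_of_ae_le [IsProbabilityMeasure ν] (h : ∀ᵐ w ∂ν, w ≤ x) : cdfFn ν x = 1 := by
  have hfull : ν (Iic x) = 1 := (mem_ae_iff_prob_eq_one measurableSet_Iic).1 h
  rw [cdfFn, hfull, ENNReal.toReal_one]

theorem sqIntTails_of_ae_mem_Icc [IsProbabilityMeasure ν] {a b : ℝ}
    (h : ∀ᵐ w ∂ν, w ∈ Icc a b) : sqIntTails ν := by
  constructor
  · have hmono : Monotone fun x => cdfFn ν x ^ 2 := fun x y hxy =>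
      pow_le_pow_left₀ (cdfFn_nonneg ν x) (monotone_cdfFn ν hxy) 2
    refine ((hmono.monotoneOn (Icc a 0)).integrableOn_isCompact
      isCompact_Icc).of_forall_sdiff_eq_zero measurableSet_Iic fun x hx => ?_
    have hxa : x < a := lt_of_not_ge fun hax => hx.2 ⟨hax, hx.1⟩
    simp [cdfFn_eq_zero_of_ae_lt (h.mono fun _ hw => hxa.trans_le hw.1)]
  · have hanti : Antitone fun x => (1 - cdfFn ν x) ^ 2 := fun x y hxy =>
      pow_le_pow_left₀ (sub_nonneg.2 (cdfFn_le_one ν y))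
        (sub_le_sub_left (monotone_cdfFn ν hxy) 1) 2
    refine ((hanti.antitoneOn (Icc 0 b)).integrableOn_isCompact
      isCompact_Icc).of_forall_sdiff_eq_zero measurableSet_Ici fun x hx => ?_
    have hbx : b < x := lt_of_not_ge fun hxb => hx.2 ⟨hx.1, hxb⟩
    simp [cdfFn_eq_one_of_ae_le (h.mono fun _ hw => hw.2.trans hbx.le)]

theorem cdfFn_eq_cdfFn_of_notMem_Ico [IsProbabilityMeasure ν₁] [IsProbabilityMeasure ν₂]
    {a b : ℝ} (h₁ : ∀ᵐ w ∂ν₁, w ∈ Icc a b) (h₂ : ∀ᵐ w ∂ν₂, w ∈ Icc a b) (hx : x ∉ Ico a b) :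
    cdfFn ν₁ x = cdfFn ν₂ x := by
  rcases lt_or_ge x a with hxa | hax
  · rw [cdfFn_eq_zero_of_ae_lt (h₁.mono fun w hw => hxa.trans_le hw.1),
      cdfFn_eq_zero_of_ae_lt (h₂.mono fun w hw => hxa.trans_le hw.1)]
  · have hbx : b ≤ x := not_lt.1 fun hxb => hx ⟨hax, hxb⟩
    rw [cdfFn_eq_one_of_ae_le (h₁.mono fun w hw => hw.2.trans hbx),
      cdfFn_eq_one_of_ae_le (h₂.mono fun w hw => hw.2.trans hbx)]

theorem memLp_two_cdfFn_sub [IsFiniteMeasure ν₁] [IsFiniteMeasure ν₂]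
    (h₁ : sqIntTails ν₁) (h₂ : sqIntTails ν₂) : MemLp (cdfFn ν₁ - cdfFn ν₂) 2 := by
  have hmeas (ν : Measure ℝ) [IsFiniteMeasure ν] : Measurable (cdfFn ν) :=
    (monotone_cdfFn ν).measurable
  have hleft {ν : Measure ℝ} [IsFiniteMeasure ν] (h : sqIntTails ν) :
      MemLp (cdfFn ν) 2 (volume.restrict (Iic 0)) :=
    (memLp_two_iff_integrable_sq (hmeas ν).aestronglyMeasurable).2 h.1
  have hright {ν : Measure ℝ} [IsFiniteMeasure ν] (h : sqIntTails ν) :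
      MemLp (fun x => 1 - cdfFn ν x) 2 (volume.restrict (Ici 0)) :=
    (memLp_two_iff_integrable_sq ((hmeas ν).const_sub 1).aestronglyMeasurable).2 h.2
  rw [memLp_two_iff_integrable_sq ((hmeas ν₁).sub (hmeas ν₂)).aestronglyMeasurable,
    ← integrableOn_univ, ← Iic_union_Ici (a := (0 : ℝ))]
  refine IntegrableOn.union ((hleft h₁).sub (hleft h₂)).integrable_sq ?_
  refine ((hright h₂).sub (hright h₁)).integrable_sq.congr (.of_forall fun x => ?_)
  simp

theorem sq_cramerDist (ν₁ ν₂ : Measure ℝ) :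
    cramerDist ν₁ ν₂ ^ 2 = ∫ x, (cdfFn ν₁ x - cdfFn ν₂ x) ^ 2 :=
  Real.sq_sqrt (integral_nonneg fun _ => sq_nonneg _)

end CDF

section Ramp

/-- The continuous piecewise affine function equal to `1` on `(-∞, a]` and to `0` on `[b, ∞)`, for
`a < b`. The partial sums of the hat functions are of this form. -/
def descendingRamp (a b x : ℝ) : ℝ := max 0 (min 1 ((b - x) / (b - a)))

variable {a b x : ℝ}

theorem descendingRamp_nonneg (a b x : ℝ) : 0 ≤ descendingRamp a b x :=
  le_max_left _ _

theorem descendingRamp_le_one (a b x : ℝ) : descendingRamp a b x ≤ 1 :=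
  max_le zero_le_one (min_le_left _ _)

theorem descendingRamp_of_le_left (hab : a < b) (hx : x ≤ a) : descendingRamp a b x = 1 := by
  have hone : 1 ≤ (b - x) / (b - a) := (one_le_div (sub_pos.2 hab)).2 (by linarith)
  rw [descendingRamp, min_eq_left hone, max_eq_right zero_le_one]

theorem descendingRamp_of_right_le (hab : a ≤ b) (hx : b ≤ x) : descendingRamp a b x = 0 := by
  have hzero : (b - x) / (b - a) ≤ 0 :=
    div_nonpos_of_nonpos_of_nonneg (sub_nonpos.2 hx) (sub_nonneg.2 hab)
  exact max_eq_left ((min_le_right _ _).trans hzero)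

theorem descendingRamp_of_mem_Icc (hx : x ∈ Icc a b) :
    descendingRamp a b x = (b - x) / (b - a) := by
  have hba : 0 ≤ b - a := sub_nonneg.2 (hx.1.trans hx.2)
  have hone : (b - x) / (b - a) ≤ 1 := div_le_one_of_le₀ (sub_le_sub_left hx.1 b) hba
  rw [descendingRamp, min_eq_right hone, max_eq_right (div_nonneg (sub_nonneg.2 hx.2) hba)]

theorem setOf_le_descendingRamp {t : ℝ} (hab : a < b) (ht : t ∈ Ioc 0 1) :
    {x | t ≤ descendingRamp a b x} = Iic (b - (b - a) * t) := by
  ext x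
  have hiff : t ≤ (b - x) / (b - a) ↔ x ≤ b - (b - a) * t := by
    rw [le_div_iff₀ (sub_pos.2 hab), le_sub_comm, mul_comm]
  simp [descendingRamp, ht.1.not_ge, ht.2, hiff]

theorem integrable_descendingRamp (a b : ℝ) (μ : Measure ℝ) [IsFiniteMeasure μ] :
    Integrable (descendingRamp a b) μ := by
  have hmeas : Measurable (descendingRamp a b) := by
    unfold descendingRamp
    fun_prop
  refine .of_bound hmeas.aestronglyMeasurable 1 (.of_forall fun x => ?_)
  rw [Real.norm_of_nonneg (descendingRamp_nonneg a b x)]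
  exact descendingRamp_le_one a b x

theorem integral_descendingRamp (hab : a < b) (μ : Measure ℝ) [IsFiniteMeasure μ] :
    ∫ w, descendingRamp a b w ∂μ = ⨍ x in a..b, cdfFn μ x := by
  calc ∫ w, descendingRamp a b w ∂μ
      = ∫ t in Ioc 0 1, μ.real {w | t ≤ descendingRamp a b w} :=
        (integrable_descendingRamp a b μ).integral_eq_integral_Ioc_meas_le
          (.of_forall (descendingRamp_nonneg a b)) (.of_forall (descendingRamp_le_one a b))
    _ = ∫ t in Ioc 0 1, cdfFn μ (b - (b - a) * t) :=
        setIntegral_congr_fun measurableSet_Ioc fun t ht =>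
          congrArg μ.real (setOf_le_descendingRamp hab ht)
    _ = ⨍ x in a..b, cdfFn μ x := by
        rw [← intervalIntegral.integral_of_le zero_le_one,
          intervalIntegral.integral_comp_sub_mul _ (sub_pos.2 hab).ne', interval_average_eq]
        simp

end Ramp

section Hat

variable {K : ℕ} {z : ℕ → ℝ}

theorem hatFn_zero_eq_descendingRamp (hK : 1 < K) (hz : z 0 < z 1) (x : ℝ) :
    hatFn K z 0 x = descendingRamp (z 0) (z 1) x := by
  have hlast : 0 ≠ K - 1 := by omega
  rcases le_or_gt x (z 0) with hx0 | hx0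
  · simp [hatFn, hx0, descendingRamp_of_le_left hz hx0]
  rcases le_or_gt x (z 1) with hx1 | hx1
  · simp [hatFn, hx0.not_ge, hlast, hK, hx0.le, hx1, descendingRamp_of_mem_Icc ⟨hx0.le, hx1⟩]
  · simp [hatFn, hx0.not_ge, hlast, hx1.not_ge, descendingRamp_of_right_le hz.le hx1.le]

theorem hatFn_succ_eq_descendingRamp_sub {j : ℕ} (hj : j + 2 < K) (hz : z j < z (j + 1))
    (hz' : z (j + 1) < z (j + 2)) (x : ℝ) :
    hatFn K z (j + 1) x
      = descendingRamp (z (j + 1)) (z (j + 2)) x - descendingRamp (z j) (z (j + 1)) x := by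
  have hlast : j + 1 ≠ K - 1 := by omega
  rcases le_or_gt (z (j + 1)) x with hx1 | hx1
  · rw [descendingRamp_of_right_le hz.le hx1, sub_zero]
    rcases le_or_gt x (z (j + 2)) with hx2 | hx2
    · simp [hatFn, hlast, hj, hx1, hx2, descendingRamp_of_mem_Icc ⟨hx1, hx2⟩]
    · simp [hatFn, hlast, hx2.not_ge, (hz'.trans hx2).not_ge,
        descendingRamp_of_right_le hz'.le hx2.le]
  · rw [descendingRamp_of_le_left hz' hx1.le]
    rcases le_or_gt (z j) x with hx0 | hx0
    · rw [descendingRamp_of_mem_Icc ⟨hx0, hx1.le⟩, one_sub_div (sub_pos.2 hz).ne',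
        sub_sub_sub_cancel_left]
      simp [hatFn, hlast, hx1.not_ge, hx0, hx1.le]
    · simp [hatFn, hlast, hx1.not_ge, hx0.not_ge, descendingRamp_of_le_left hz hx0.le]

theorem hatFn_last_eq_one_sub_descendingRamp {j : ℕ} (hz : z j < z (j + 1)) (x : ℝ) :
    hatFn (j + 2) z (j + 1) x = 1 - descendingRamp (z j) (z (j + 1)) x := by
  rcases le_or_gt (z (j + 1)) x with hx1 | hx1
  · simp [hatFn, hx1, descendingRamp_of_right_le hz.le hx1]
  rcases le_or_gt (z j) x with hx0 | hx0
  · rw [descendingRamp_of_mem_Icc ⟨hx0, hx1.le⟩, one_sub_div (sub_pos.2 hz).ne',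
      sub_sub_sub_cancel_left]
    simp [hatFn, hx1.not_ge, hx0, hx1.le]
  · simp [hatFn, hx1.not_ge, hx0.not_ge, descendingRamp_of_le_left hz hx0.le]

theorem grid_lt_succ (hz : StrictMonoOn z (Iio K)) {i : ℕ} (hi : i + 1 < K) : z i < z (i + 1) :=
  hz (mem_Iio.2 (i.lt_succ_self.trans hi)) (mem_Iio.2 hi) i.lt_succ_self

theorem sum_range_succ_hatFn (hz : StrictMonoOn z (Iio K)) {j : ℕ} (hj : j + 1 < K) (x : ℝ) :
    ∑ i ∈ Finset.range (j + 1), hatFn K z i x = descendingRamp (z j) (z (j + 1)) x := by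
  induction j with
  | zero => simp [hatFn_zero_eq_descendingRamp hj (grid_lt_succ hz hj)]
  | succ j ih =>
    have hj' : j + 1 < K := by omega
    rw [Finset.sum_range_succ, ih hj',
      hatFn_succ_eq_descendingRamp_sub hj (grid_lt_succ hz hj') (grid_lt_succ hz hj)]
    ring

theorem sum_range_hatFn (hz : StrictMonoOn z (Iio K)) (hK : 0 < K) (x : ℝ) :
    ∑ i ∈ Finset.range K, hatFn K z i x = 1 := by
  obtain _ | _ | n := K
  · exact (lt_irrefl 0 hK).elim
  · rcases le_total x (z 0) with hx | hx <;> simp [hatFn, hx]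
  · have hn : n + 1 < n + 2 := by omega
    rw [Finset.sum_range_succ, sum_range_succ_hatFn hz hn,
      hatFn_last_eq_one_sub_descendingRamp (grid_lt_succ hz hn), add_sub_cancel]

theorem hatFn_nonneg (hz : StrictMonoOn z (Iio K)) (i : ℕ) (x : ℝ) : 0 ≤ hatFn K z i x := by
  unfold hatFn
  split_ifs with hfirst hlast hright hleft
  · exact zero_le_one
  · exact zero_le_one
  · exact div_nonneg (sub_nonneg.2 hright.2.2) (sub_nonneg.2 (grid_lt_succ hz hright.1).le)
  · exact div_nonneg (sub_nonneg.2 hleft.2.1) (sub_nonneg.2 (hleft.2.1.trans hleft.2.2))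
  · exact le_rfl

theorem hatFn_le_one (hz : StrictMonoOn z (Iio K)) {i : ℕ} (hi : i < K) (x : ℝ) :
    hatFn K z i x ≤ 1 := by
  rw [← sum_range_hatFn hz (i.zero_le.trans_lt hi) x]
  exact Finset.single_le_sum (fun k _ => hatFn_nonneg hz k x) (Finset.mem_range.2 hi)

theorem measurable_hatFn (K : ℕ) (z : ℕ → ℝ) (i : ℕ) : Measurable (hatFn K z i) :=
  .ite (by measurability) measurable_const <| .ite (by measurability) measurable_const <|
    .ite (by measurability) (by fun_prop) <| .ite (by measurability) (by fun_prop) measurable_const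

theorem integrable_hatFn (hz : StrictMonoOn z (Iio K)) {i : ℕ} (hi : i < K) (μ : Measure ℝ)
    [IsFiniteMeasure μ] : Integrable (hatFn K z i) μ := by
  refine .of_bound (measurable_hatFn K z i).aestronglyMeasurable 1 (.of_forall fun x => ?_)
  rw [Real.norm_of_nonneg (hatFn_nonneg hz i x)]
  exact hatFn_le_one hz hi x

end Hat

section Grid

variable {K : ℕ} {z : ℕ → ℝ} {ν : Measure ℝ}

theorem ae_mem_Icc_of_ae_mem_grid (hz : MonotoneOn z (Iio K)) (hν : ∀ᵐ w ∂ν, w ∈ z '' Iio K) :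
    ∀ᵐ w ∂ν, w ∈ Icc (z 0) (z (K - 1)) := by
  filter_upwards [hν]
  rintro _ ⟨i, hi : i < K, rfl⟩
  exact ⟨hz (mem_Iio.2 (by omega)) hi i.zero_le, hz hi (mem_Iio.2 (by omega)) (by omega)⟩

theorem cdfFn_eq_of_mem_cell (hz : StrictMonoOn z (Iio K)) (hν : ∀ᵐ w ∂ν, w ∈ z '' Iio K) {j : ℕ}
    (hj : j + 1 < K) {x : ℝ} (hx : x ∈ Ico (z j) (z (j + 1))) : cdfFn ν x = cdfFn ν (z j) := by
  refine cdfFn_congr (hν.mono ?_)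
  rintro _ ⟨i, hi, rfl⟩
  refine ⟨fun hix => ?_, fun hij => hij.trans hx.1⟩
  have hlt : i < j + 1 := (hz.lt_iff_lt hi hj).1 (hix.trans_lt hx.2)
  exact hz.monotoneOn hi (mem_Iio.2 (by omega)) (Nat.lt_succ_iff.1 hlt)

end Grid

section Projection

variable {K : ℕ} {z : ℕ → ℝ}

theorem ae_mem_grid_cramerProj (K : ℕ) (z : ℕ → ℝ) (μ : Measure ℝ) :
    ∀ᵐ w ∂cramerProj K z μ, w ∈ z '' Iio K := by
  rw [ae_iff, cramerProj, Measure.finsetSum_apply]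
  refine Finset.sum_eq_zero fun i hi => ?_
  have hmem : z i ∈ z '' Iio K := mem_image_of_mem z (Finset.mem_range.1 hi)
  rw [Measure.smul_apply, smul_eq_mul, Measure.dirac_apply,
    indicator_of_notMem (not_not.2 hmem), mul_zero]

theorem isProbabilityMeasure_cramerProj (hz : StrictMonoOn z (Iio K)) (hK : 0 < K)
    (μ : Measure ℝ) [IsProbabilityMeasure μ] : IsProbabilityMeasure (cramerProj K z μ) where
  measure_univ := by
    calc cramerProj K z μ univ
        = ∑ i ∈ Finset.range K, ENNReal.ofReal (∫ w, hatFn K z i w ∂μ) := by simp [cramerProj]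
      _ = ENNReal.ofReal (∑ i ∈ Finset.range K, ∫ w, hatFn K z i w ∂μ) :=
          (ENNReal.ofReal_sum_of_nonneg fun i _ => integral_nonneg (hatFn_nonneg hz i)).symm
      _ = ENNReal.ofReal (∫ w, ∑ i ∈ Finset.range K, hatFn K z i w ∂μ) := by
          rw [integral_finsetSum _ fun i hi => integrable_hatFn hz (Finset.mem_range.1 hi) μ]
      _ = 1 := by simp [sum_range_hatFn hz hK]

theorem cdfFn_cramerProj (hz : StrictMonoOn z (Iio K)) (μ : Measure ℝ) (x : ℝ) :
    cdfFn (cramerProj K z μ) x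
      = ∑ i ∈ Finset.range K with z i ≤ x, ∫ w, hatFn K z i w ∂μ := by
  have hterm (i : ℕ) :
      ((ENNReal.ofReal (∫ w, hatFn K z i w ∂μ) • Measure.dirac (z i)) (Iic x)).toReal
        = if z i ≤ x then ∫ w, hatFn K z i w ∂μ else 0 := by
    have hnonneg : 0 ≤ ∫ w, hatFn K z i w ∂μ := integral_nonneg (hatFn_nonneg hz i)
    by_cases hix : z i ≤ x <;> simp [hix, hnonneg]
  rw [cdfFn, cramerProj, Measure.finsetSum_apply, ENNReal.toReal_sum, Finset.sum_filter]
  · exact Finset.sum_congr rfl fun i _ => hterm i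
  · exact fun i _ => ENNReal.mul_ne_top ENNReal.ofReal_ne_top (measure_ne_top _ _)

theorem cdfFn_cramerProj_grid (hz : StrictMonoOn z (Iio K)) (μ : Measure ℝ) [IsFiniteMeasure μ]
    {j : ℕ} (hj : j + 1 < K) :
    cdfFn (cramerProj K z μ) (z j) = ⨍ x in z j..z (j + 1), cdfFn μ x := by
  have hindices : {i ∈ Finset.range K | z i ≤ z j} = Finset.range (j + 1) := by
    ext i
    rw [Finset.mem_filter, Finset.mem_range, Finset.mem_range, Nat.lt_succ_iff]
    refine ⟨fun ⟨hi, hij⟩ => (hz.le_iff_le hi (mem_Iio.2 (by omega))).1 hij, fun hij => ?_⟩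
    have hi : i < K := by omega
    exact ⟨hi, hz.monotoneOn hi (mem_Iio.2 (by omega)) hij⟩
  have hint : ∀ i ∈ Finset.range (j + 1), Integrable (hatFn K z i) μ := fun i hi =>
    integrable_hatFn hz ((Finset.mem_range.1 hi).trans hj) μ
  rw [cdfFn_cramerProj hz, hindices, ← integral_finsetSum _ hint,
    ← integral_descendingRamp (grid_lt_succ hz hj)]
  simp only [sum_range_succ_hatFn hz hj]

theorem cdfFn_cramerProj_of_mem_cell (hz : StrictMonoOn z (Iio K)) (μ : Measure ℝ)
    [IsFiniteMeasure μ] {j : ℕ} (hj : j + 1 < K) {x : ℝ} (hx : x ∈ Ico (z j) (z (j + 1))) :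
    cdfFn (cramerProj K z μ) x = ⨍ y in z j..z (j + 1), cdfFn μ y := by
  rw [cdfFn_eq_of_mem_cell hz (ae_mem_grid_cramerProj K z μ) hj hx, cdfFn_cramerProj_grid hz μ hj]

end Projection

section Pythagorean

variable {K : ℕ} {z : ℕ → ℝ} {μ ν ν₁ ν₂ : Measure ℝ}

theorem integral_cdfFn_sub_cramerProj_mul_eq_zero [IsFiniteMeasure μ] [IsProbabilityMeasure ν₁]
    [IsProbabilityMeasure ν₂] (hz : StrictMonoOn z (Iio K)) (hν₁ : ∀ᵐ w ∂ν₁, w ∈ z '' Iio K)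
    (hν₂ : ∀ᵐ w ∂ν₂, w ∈ z '' Iio K) :
    ∫ x, (cdfFn μ x - cdfFn (cramerProj K z μ) x) * (cdfFn ν₁ x - cdfFn ν₂ x) = 0 := by
  obtain ⟨_, i, hi : i < K, -⟩ := hν₁.exists
  have hlt : ∀ j < K - 1, j + 1 < K := by omega
  refine integral_sub_average_mul_eq_zero (n := K - 1)
    (hz.mono fun j (hj : j ≤ K - 1) => mem_Iio.2 (by omega))
    (fun _ _ => (monotone_cdfFn μ).intervalIntegrable)
    (fun j hj _ hx => cdfFn_cramerProj_of_mem_cell hz μ (hlt j hj) hx)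
    (fun j hj x hx => ?_) fun x hx => ?_
  · rw [cdfFn_eq_of_mem_cell hz hν₁ (hlt j hj) hx, cdfFn_eq_of_mem_cell hz hν₂ (hlt j hj) hx]
  · exact sub_eq_zero.2 (cdfFn_eq_cdfFn_of_notMem_Ico (ae_mem_Icc_of_ae_mem_grid hz.monotoneOn hν₁)
      (ae_mem_Icc_of_ae_mem_grid hz.monotoneOn hν₂) hx)

theorem cramerProj_pythagorean_general [IsProbabilityMeasure μ] [IsProbabilityMeasure ν]
    (hz : StrictMonoOn z (Iio K)) (hμ : sqIntTails μ) (hν : ∀ᵐ w ∂ν, w ∈ z '' Iio K) :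
    cramerDist μ ν ^ 2
      = cramerDist μ (cramerProj K z μ) ^ 2 + cramerDist (cramerProj K z μ) ν ^ 2 := by
  obtain ⟨_, i, hi : i < K, -⟩ := hν.exists
  have := isProbabilityMeasure_cramerProj hz (i.zero_le.trans_lt hi) μ
  have hproj := ae_mem_grid_cramerProj K z μ
  have hproj_tails := sqIntTails_of_ae_mem_Icc (ae_mem_Icc_of_ae_mem_grid hz.monotoneOn hproj)
  have hν_tails := sqIntTails_of_ae_mem_Icc (ae_mem_Icc_of_ae_mem_grid hz.monotoneOn hν)
  simp only [sq_cramerDist]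
  exact integral_sub_sq_eq_add_of_integral_mul_eq_zero (memLp_two_cdfFn_sub hμ hproj_tails)
    (memLp_two_cdfFn_sub hproj_tails hν_tails)
    (integral_cdfFn_sub_cramerProj_mul_eq_zero hz hproj hν)

end Pythagorean

/-- Pythagorean theorem for the Cramér projection. -/
theorem cramerProj_pythagorean
    (K : ℕ) (hK : 2 ≤ K) (z : ℕ → ℝ) (hz : ∀ i, i + 1 < K → z i < z (i + 1))
    (μ : Measure ℝ) [IsProbabilityMeasure μ] (hμ : μ (Set.Icc (z 0) (z (K - 1)))ᶜ = 0)
    (ν : Measure ℝ) [IsProbabilityMeasure ν] (hν : ν {w | ∃ i < K, w = z i}ᶜ = 0) :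
    (cramerDist μ ν) ^ 2 = (cramerDist μ (cramerProj K z μ)) ^ 2
      + (cramerDist (cramerProj K z μ) ν) ^ 2 := by
  have hmono : StrictMonoOn z (Iio K) :=
    strictMonoOn_of_lt_add_one ordConnected_Iio fun i _ _ hi => hz i hi
  have hν_grid : ∀ᵐ w ∂ν, w ∈ z '' Iio K := by
    filter_upwards [show ∀ᵐ w ∂ν, ∃ i < K, w = z i from hν] with w ⟨i, hi, hw⟩
    exact ⟨i, hi, hw.symm⟩
  exact cramerProj_pythagorean_general hmono (sqIntTails_of_ae_mem_Icc hμ) hν_grid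

end
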